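/- arXiv:math/9803109 — 3 statements merged into one kernel-verified Lean document; each statement's English description precedes it below -/
import Mathlib

section
/- Let n and m be natural numbers and let E₁, …, E_m be vectors in ℝⁿ. There exists a vector x ∈ ℝⁿ with every coordinate strictly positive such that the dot product ⟪E_j, x⟫ = 0 for every j ∈ {1, …, m}, if and only if there is no vector v ∈ ℝᵐ for which the linear combination ∑_{j=1}^{m} v_j E_j has every coordinate nonnegative and at least one coordinate strictly positive. -/
/-!
If `x` is strictly positive and orthogonal to every row, then a combination `w` of the rows has
`∑ i, w i * x i = 0`, whereas this sum is positive as soon as `w` is nonnegative and nonzero.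

Conversely, if no combination of the rows is nonnegative and nonzero, the row space is disjoint from
the standard simplex. The row space is closed and convex and the simplex is compact and convex, so
the Hahn–Banach theorem separates them strictly by a linear functional `f`. Being bounded below on a
subspace, `f` vanishes there, so it is strictly negative on the simplex; hence `x i = -f (e i)`,
with `e i` the standard basis, is the required vector.
-/

/-- Stiemke's lemma (finite-dimensional alternative theorem): for vectors
`E 0, …, E (m-1)` in `ℝⁿ` (the rows of `E`), there exists a strictly positive
vector `x` orthogonal to every `E j` iff no linear combination
`∑ j, v j • E j` is nonnegative in every coordinate and strictly positive in
some coordinate. -/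
theorem stmt_0 (n m : ℕ) (E : Matrix (Fin m) (Fin n) ℝ) :
    (∃ x : Fin n → ℝ, (∀ i, 0 < x i) ∧ ∀ j : Fin m, ∑ i, E j i * x i = 0) ↔
      ¬ ∃ v : Fin m → ℝ,
        (∀ i : Fin n, 0 ≤ ∑ j, v j * E j i) ∧ (∃ i : Fin n, 0 < ∑ j, v j * E j i) := by
  constructor
  · rintro ⟨x, hx, hE⟩ ⟨v, hv, i₀, hi₀⟩
    have hpos : 0 < ∑ i, (∑ j, v j * E j i) * x i :=
      Finset.sum_pos' (fun i _ => mul_nonneg (hv i) (hx i).le)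
        ⟨i₀, Finset.mem_univ _, mul_pos hi₀ (hx i₀)⟩
    have hzero : ∑ i, (∑ j, v j * E j i) * x i = 0 := by
      simp_rw [Finset.sum_mul]
      rw [Finset.sum_comm]
      simp_rw [mul_assoc, ← Finset.mul_sum, hE, mul_zero, Finset.sum_const_zero]
    exact hpos.ne' hzero
  · intro h
    let W : Submodule ℝ (Fin n → ℝ) := Submodule.span ℝ (Set.range fun j => E j)
    have hdisj : Disjoint (stdSimplex ℝ (Fin n)) (W : Set (Fin n → ℝ)) := by
      rw [Set.disjoint_left]
      rintro w ⟨hw0, hw1⟩ hwW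
      obtain ⟨v, rfl⟩ := (Submodule.mem_span_range_iff_exists_fun ℝ).1 hwW
      simp only [Finset.sum_apply, Pi.smul_apply, smul_eq_mul] at hw0 hw1
      refine h ⟨v, hw0, ?_⟩
      by_contra! hle
      linarith [Finset.sum_nonpos fun i (_ : i ∈ Finset.univ) => hle i]
    obtain ⟨f, a, b, hfa, hab, hfb⟩ := geometric_hahn_banach_compact_closed
      (convex_stdSimplex ℝ (Fin n)) (isCompact_stdSimplex ℝ (Fin n)) W.convex
      W.closed_of_finiteDimensional hdisj
    have hb : b < 0 := by simpa using hfb 0 W.zero_mem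
    have hfE (j : Fin m) : f (E j) = 0 := by
      by_contra hne
      -- The multiple of `E j` on which `f` takes the value `b` contradicts the strict bound `b < f`.
      have := hfb ((b / f (E j)) • E j) (W.smul_mem _ (Submodule.subset_span ⟨j, rfl⟩))
      rw [map_smul, smul_eq_mul, div_mul_cancel₀ _ hne] at this
      exact lt_irrefl _ this
    refine ⟨fun i => -f (Pi.single i 1), fun i => ?_, fun j => ?_⟩
    · linarith [hfa _ (single_mem_stdSimplex ℝ i)]
    · have hsum : f (E j) = ∑ i, E j i * f (Pi.single i 1) := by
        conv_lhs => rw [← Finset.univ_sum_single (E j)]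
        rw [map_sum]
        refine Finset.sum_congr rfl fun i _ => ?_
        rw [← smul_eq_mul, ← map_smul, ← Pi.single_smul, smul_eq_mul, mul_one]
      simp only [mul_neg, Finset.sum_neg_distrib, ← hsum, hfE, neg_zero]
end

section
/- Let H be a linear subspace of ℝⁿ. The orthogonal complement H^⊥ (with respect to the standard inner product on ℝⁿ) contains a vector all of whose coordinates are strictly positive if and only if the only vector in H all of whose coordinates are nonnegative is the zero vector. -/
/-!
If `x` is positive and orthogonal to `H`, a nonnegative `h ∈ H` has `∑ i, h i * x i = 0` with all
terms nonnegative, so every term, hence every `h i`, vanishes.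

Conversely, if `0` is the only nonnegative vector of `H`, then the closed set `H` is disjoint from
the compact standard simplex, and Hahn–Banach strictly separates the two by a linear functional `f`.
Being bounded above on a subspace, `f` vanishes on `H`; hence it is positive on the simplex, in
particular on the standard basis vectors. Its coordinate vector is the required `x`.
-/

/-- The orthogonal complement (w.r.t. the standard inner product on `ℝⁿ`) of a
subspace `H` contains a vector with all coordinates strictly positive iff the
only vector in `H` with all coordinates nonnegative is `0`. -/
theorem stmt_1 (n : ℕ) (H : Submodule ℝ (Fin n → ℝ)) :
    (∃ x : Fin n → ℝ, (∀ i, 0 < x i) ∧ ∀ h ∈ H, ∑ i, h i * x i = 0) ↔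
      ∀ h ∈ H, (∀ i, 0 ≤ h i) → h = 0 := by
  constructor
  · rintro ⟨x, hx, hH⟩ h hh hpos
    have hterm := (Finset.sum_eq_zero_iff_of_nonneg
      (fun i _ => mul_nonneg (hpos i) (hx i).le)).1 (hH h hh)
    ext i
    exact (mul_eq_zero.1 (hterm i (Finset.mem_univ i))).resolve_right (hx i).ne'
  · intro hH
    have hdisj : Disjoint (H : Set (Fin n → ℝ)) (stdSimplex ℝ (Fin n)) := by
      rw [Set.disjoint_left]
      rintro h hh ⟨hpos, hsum⟩
      simp [hH h hh hpos] at hsum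
    obtain ⟨f, u, v, hfu, huv, hfv⟩ := geometric_hahn_banach_closed_compact H.convex
      H.closed_of_finiteDimensional (convex_stdSimplex ℝ (Fin n)) (isCompact_stdSimplex ℝ (Fin n))
      hdisj
    have hu : 0 < u := by simpa using hfu 0 H.zero_mem
    have hf : ∀ h ∈ H, f h = 0 := by
      intro h hh
      by_contra hne
      -- Otherwise some multiple of `h` attains the value `u`.
      have hlt := hfu ((u / f h) • h) (H.smul_mem _ hh)
      rw [map_smul, smul_eq_mul, div_mul_cancel₀ _ hne] at hlt
      exact lt_irrefl _ hlt
    refine ⟨fun i => f (Pi.single i 1), fun i => ?_, fun h hh => ?_⟩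
    · exact hu.trans (huv.trans (hfv _ (single_mem_stdSimplex ℝ i)))
    · rw [← hf h hh]
      conv_rhs => rw [pi_eq_sum_univ' h]
      simp [map_sum, Pi.single]
end

section
/- Let n ≥ 1 and let v ∈ ℝⁿ. Write K = {x ∈ ℝⁿ : xᵢ > 0 for every i} for the open positive cone. Then the hyperplane {x ∈ ℝⁿ : ⟪v, x⟫ = 0} orthogonal to v is disjoint from K if and only if v ≠ 0 and either every coordinate of v is nonnegative or every coordinate of v is nonpositive. -/
/-!
If `v` has coordinates of both signs, one of them, `v c`, has sign opposite to `S = ∑ i, v i`, so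
moving the all-ones vector by `-S / v c ≥ 0` along the `c`-th axis gives a positive vector
orthogonal to `v` (`exists_pos_orthogonal`). Conversely, if `v` has constant sign and `x` is
positive, then all terms of `∑ i, v i * x i` have the same sign, so the sum vanishes only for
`v = 0`.
-/

lemma exists_pos_orthogonal {n : ℕ} (v : Fin n → ℝ) (c : Fin n) (hc : v c ≠ 0)
    (h : 0 ≤ -(∑ i, v i) / v c) : ∃ x : Fin n → ℝ, ∑ i, v i * x i = 0 ∧ ∀ i, 0 < x i := by
  refine ⟨fun i => 1 + if i = c then -(∑ i, v i) / v c else 0, ?_, fun i => ?_⟩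
  · simp only [mul_add, mul_one, Finset.sum_add_distrib, mul_ite, mul_zero,
      Finset.sum_ite_eq', Finset.sum_ite_eq, Finset.mem_univ, if_true]
    field_simp
    ring
  · dsimp only
    split_ifs <;> linarith

lemma eq_zero_of_nonneg_of_orthogonal {n : ℕ} {v x : Fin n → ℝ} (hv : ∀ i, 0 ≤ v i)
    (hx : ∀ i, 0 < x i) (h : ∑ i, v i * x i = 0) : v = 0 := by
  rw [Finset.sum_eq_zero_iff_of_nonneg fun i _ => mul_nonneg (hv i) (hx i).le] at h
  funext i
  exact (mul_eq_zero.mp (h i (Finset.mem_univ i))).resolve_right (hx i).ne'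

/-- For `n ≥ 1` and `v ∈ ℝⁿ`, the hyperplane orthogonal to `v` is disjoint from
the open positive cone `K = {x | ∀ i, 0 < x i}` iff `v ≠ 0` and `v` has all
coordinates nonnegative or all coordinates nonpositive. -/
theorem stmt_2 (n : ℕ) (hn : 1 ≤ n) (v : Fin n → ℝ) :
    {x : Fin n → ℝ | ∑ i, v i * x i = 0} ∩ {x : Fin n → ℝ | ∀ i, 0 < x i} = ∅ ↔
      v ≠ 0 ∧ ((∀ i, 0 ≤ v i) ∨ (∀ i, v i ≤ 0)) := by
  rw [Set.eq_empty_iff_forall_notMem]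
  constructor
  · intro h
    have h' : ¬ ∃ x : Fin n → ℝ, ∑ i, v i * x i = 0 ∧ ∀ i, 0 < x i :=
      fun ⟨x, hx⟩ => h x hx
    refine ⟨fun hv => h' ⟨fun _ => 1, by simp [hv], fun _ => one_pos⟩, ?_⟩
    by_contra hcon
    rw [not_or] at hcon
    obtain ⟨h1, h2⟩ := hcon
    rw [not_forall] at h1 h2
    obtain ⟨a, ha⟩ := h1
    obtain ⟨b, hb⟩ := h2
    rw [not_le] at ha hb
    rcases le_total 0 (∑ i, v i) with hS | hS
    · exact h' (exists_pos_orthogonal v a ha.ne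
        (div_nonneg_of_nonpos (neg_nonpos.mpr hS) ha.le))
    · exact h' (exists_pos_orthogonal v b hb.ne' (div_nonneg (neg_nonneg.mpr hS) hb.le))
  · rintro ⟨hv, hpos | hneg⟩ x ⟨hx0, hx⟩
    · exact hv (eq_zero_of_nonneg_of_orthogonal hpos hx hx0)
    · refine hv (neg_eq_zero.mp (eq_zero_of_nonneg_of_orthogonal (v := -v) (x := x)
        (fun i => neg_nonneg.mpr (hneg i)) hx ?_))
      simpa using hx0
end
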